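/- arXiv:1708.05322 — 5 statements merged into one kernel-verified Lean document; each statement's English description precedes it below -/
import Mathlib

section
/- Let I be a tall Borel ideal on ℕ that has a Borel selector. Then there is a Borel function c : 2^ℕ → ℕ^ℕ such that I ≰_K I_c. -/
/-- `x` is a subset of `y`, for subsets of `α` coded as characteristic functions. -/
def subB {α : Type} (x y : α → Bool) : Prop := ∀ a, x a = true → y a = true

/-- Union of two subsets of `α` coded as characteristic functions. -/
def unionB {α : Type} (x y : α → Bool) : α → Bool := fun a => x a || y a

/-- The set coded by a characteristic function. -/
def suppB {α : Type} (x : α → Bool) : Set α := {a | x a = true}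

/-- The coded set is infinite. -/
def InfiniteB {α : Type} (x : α → Bool) : Prop := (suppB x).Infinite

/-- `I` is an ideal: closed under subsets and (finite) unions. -/
def IsIdealB {α : Type} (I : Set (α → Bool)) : Prop :=
  (∀ x ∈ I, ∀ y, subB y x → y ∈ I) ∧ ∀ x ∈ I, ∀ y ∈ I, unionB x y ∈ I

/-- `I` is tall: every infinite set has an infinite subset in `I`. -/
def IsTallB {α : Type} (I : Set (α → Bool)) : Prop :=
  ∀ x, InfiniteB x → ∃ y ∈ I, InfiniteB y ∧ subB y x

/-- `I` contains all finite sets. -/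
def ContainsFinB {α : Type} (I : Set (α → Bool)) : Prop :=
  ∀ x : α → Bool, (suppB x).Finite → x ∈ I

/-- `I` is an `F_σ` subset of the Cantor space `α → Bool`. -/
def IsFsigmaB {α : Type} (I : Set (α → Bool)) : Prop :=
  ∃ F : ℕ → Set (α → Bool), (∀ n, IsClosed (F n)) ∧ I = ⋃ n, F n

/-- Katětov order: `I ≤_K J` via some `f` with `f⁻¹[A] ∈ J` for all `A ∈ I`. -/
def KatLE {α β : Type} (I : Set (α → Bool)) (J : Set (β → Bool)) : Prop :=
  ∃ f : β → α, ∀ x ∈ I, (fun b => x (f b)) ∈ J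


/-- A chain in `2^{<ω}`: any two elements are comparable under end-extension (prefix). -/
def IsChainPre (S : Set (List Bool)) : Prop :=
  ∀ a ∈ S, ∀ b ∈ S, a <+: b ∨ b <+: a

/-- An antichain in `2^{<ω}`: distinct elements are incomparable under end-extension. -/
def IsAntichainPre (S : Set (List Bool)) : Prop :=
  ∀ a ∈ S, ∀ b ∈ S, a ≠ b → ¬ a <+: b ∧ ¬ b <+: a


/-- The initial segment `x↾m` of `x ∈ 2^ℕ`, as an element of `2^{<ω}`. -/
def seg (x : ℕ → Bool) (m : ℕ) : List Bool := List.ofFn (fun i : Fin m => x i)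

/-- Generators of the ideal `I_c`: antichains; the blocks `{x↾m : m ∈ c(x)⁻¹(n)}` of a branch;
and sets of initial segments of a branch meeting each block `{x↾m : m ∈ c(x)⁻¹(n)}` in at most
one point. -/
def GenIc (c : (ℕ → Bool) → (ℕ → ℕ)) (S : Set (List Bool)) : Prop :=
  IsAntichainPre S ∨
  (∃ (x : ℕ → Bool) (n : ℕ), S = {s | ∃ m, c x m = n ∧ s = seg x m}) ∨
  (∃ x : ℕ → Bool, (∀ s ∈ S, ∃ m, s = seg x m) ∧
    ∀ n : ℕ, {s ∈ S | ∃ m, c x m = n ∧ s = seg x m}.Subsingleton)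

/-- The ideal `I_c` on `2^{<ω}`, generated by the sets satisfying `GenIc c`. -/
def IdealIc (c : (ℕ → Bool) → (ℕ → ℕ)) : Set (List Bool → Bool) :=
  {y | ∃ (k : ℕ) (F : Fin k → Set (List Bool)), (∀ i, GenIc c (F i)) ∧
        ∀ s : List Bool, y s = true → ∃ i, s ∈ F i}


/-!
A Borel surjection `e` from Cantor space onto the maps `2^{<ω} → α` lets every branch `x` code a
candidate Katětov reduction, whose values along `x` itself form the sequence `g m = e x (x↾m)`.
Applied to the range of `g`, or replaced by that range itself when it is finite, the selector
yields in a Borel way a set `A ∈ I` whose preimage `g⁻¹[A]` is infinite, and `c x` is chosen to take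
every value infinitely often on `g⁻¹[A]`. Along a branch `x`, a set in `I_c` has infinite
intersection with only finitely many of the colour classes of `c x`. Hence, for the branch `x` that
codes `f`, the set `f⁻¹[A]` is not in `I_c`, and `f` is not a reduction.
-/

open Filter Function

section InitialSegments

variable {x y : ℕ → Bool} {m k : ℕ}

theorem length_seg (x : ℕ → Bool) (m : ℕ) : (seg x m).length = m :=
  List.length_ofFn

theorem seg_eq_seg_iff : seg x m = seg y k ↔ m = k ∧ ∀ i < m, x i = y i := by
  constructor
  · intro h
    obtain rfl : m = k := by simpa only [length_seg] using congrArg List.length h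
    exact ⟨rfl, fun i hi => congrFun (List.ofFn_injective h) ⟨i, hi⟩⟩
  · rintro ⟨rfl, h⟩
    exact congrArg List.ofFn (funext fun i => h i i.isLt)

theorem seg_injective (x : ℕ → Bool) : Injective (seg x) :=
  fun _ _ h => (seg_eq_seg_iff.mp h).1

theorem seg_prefix_seg (x : ℕ → Bool) (h : m ≤ k) : seg x m <+: seg x k := by
  rw [List.prefix_iff_eq_take]
  exact List.ext_getElem (by simp [seg, h]) (by simp [seg])

theorem finite_setOf_seg_mem_of_ne {G : Set (List Bool)} (hG : ∀ s ∈ G, ∃ k, s = seg y k)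
    (hxy : x ≠ y) : {m | seg x m ∈ G}.Finite := by
  obtain ⟨i, hi⟩ := ne_iff.mp hxy
  refine (Set.finite_Iic i).subset fun m hm => ?_
  obtain ⟨k, hk⟩ := hG _ hm
  exact not_lt.mp fun him => hi ((seg_eq_seg_iff.mp hk).2 i him)

theorem IsAntichainPre.subsingleton_setOf_seg_mem {G : Set (List Bool)} (hG : IsAntichainPre G)
    (x : ℕ → Bool) : {m | seg x m ∈ G}.Subsingleton := by
  intro a ha b hb
  by_contra hab
  have incomparable := hG _ ha _ hb ((seg_injective x).ne hab)
  rcases le_total a b with h | h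
  · exact incomparable.1 (seg_prefix_seg x h)
  · exact incomparable.2 (seg_prefix_seg x h)

end InitialSegments

section FiniteFibers

variable {c : (ℕ → Bool) → (ℕ → ℕ)}

theorem GenIc.eventually_finite_fiber {G : Set (List Bool)} (hG : GenIc c G) (x : ℕ → Bool) :
    ∀ᶠ n in cofinite, {m | c x m = n ∧ seg x m ∈ G}.Finite := by
  have of_finite (h : {m | seg x m ∈ G}.Finite) :
      ∀ᶠ n in cofinite, {m | c x m = n ∧ seg x m ∈ G}.Finite :=
    .of_forall fun _ => h.subset fun _ hm => hm.2
  rcases hG with hanti | ⟨y, n, rfl⟩ | ⟨y, hbranch, hselective⟩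
  · exact of_finite (hanti.subsingleton_setOf_seg_mem x).finite
  · by_cases hxy : x = y
    · subst hxy
      filter_upwards [eventually_cofinite_ne n] with k hkn
      refine Set.finite_empty.subset ?_
      rintro m ⟨hk, m', hn, hm⟩
      obtain rfl := seg_injective x hm
      exact hkn (hk.symm.trans hn)
    · exact of_finite <| finite_setOf_seg_mem_of_ne (fun _ ⟨k, _, hk⟩ => ⟨k, hk⟩) hxy
  · by_cases hxy : x = y
    · subst hxy
      refine .of_forall fun n => Set.Subsingleton.finite ?_
      rintro a ⟨ha, haG⟩ b ⟨hb, hbG⟩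
      exact seg_injective x (hselective n ⟨haG, a, ha, rfl⟩ ⟨hbG, b, hb, rfl⟩)
    · exact of_finite (finite_setOf_seg_mem_of_ne hbranch hxy)

theorem eventually_finite_fiber_of_mem_idealIc {A : List Bool → Bool} (hA : A ∈ IdealIc c)
    (x : ℕ → Bool) : ∀ᶠ n in cofinite, {m | c x m = n ∧ A (seg x m) = true}.Finite := by
  obtain ⟨k, F, hF, hcover⟩ := hA
  filter_upwards [eventually_all.mpr fun i => (hF i).eventually_finite_fiber x] with n hn
  refine (Set.finite_iUnion hn).subset ?_
  rintro m ⟨hm, hmA⟩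
  obtain ⟨i, hi⟩ := hcover _ hmA
  exact Set.mem_iUnion.mpr ⟨i, hm, hi⟩

theorem not_katLE_idealIc_of_frequently_infinite_fiber {α : Type} {I : Set (α → Bool)}
    (h : ∀ f : List Bool → α, ∃ A ∈ I, ∃ x : ℕ → Bool,
      ∃ᶠ n in cofinite, {m | c x m = n ∧ A (f (seg x m)) = true}.Infinite) :
    ¬ KatLE I (IdealIc c) := by
  rintro ⟨f, hf⟩
  obtain ⟨A, hA, x, hx⟩ := h f
  exact hx ((eventually_finite_fiber_of_mem_idealIc (hf A hA) x).mono fun _ => not_not_intro)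

end FiniteFibers

section Measurability

theorem exists_measurable_surjective_natBool (X : Type*) [MeasurableSpace X]
    [StandardBorelSpace X] [Nonempty X] : ∃ e : (ℕ → Bool) → X, Measurable e ∧ Surjective e := by
  obtain ⟨i, hi, hinj⟩ := MeasurableSpace.measurable_injection_nat_bool_of_countablySeparated X
  obtain ⟨e, he, hei⟩ := (hi.measurableEmbedding hinj).exists_measurable_extend measurable_id
    fun _ => inferInstance
  exact ⟨e, he, fun y => ⟨i y, congrFun hei y⟩⟩

theorem measurable_apply_of_countable {X ι β : Type*} [Countable ι] [MeasurableSpace X]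
    [MeasurableSpace ι] [MeasurableSingletonClass ι] [MeasurableSpace β] {f : X → ι → β}
    {i : X → ι} (hf : Measurable f) (hi : Measurable i) : Measurable fun x => f x (i x) :=
  (measurable_from_prod_countable_left (f := fun p : (ι → β) × ι => p.1 p.2)
    measurable_pi_apply).comp (hf.prodMk hi)

theorem measurable_apply_seg {β : Type*} [MeasurableSpace β] {e : (ℕ → Bool) → (List Bool → β)}
    (he : Measurable e) : Measurable fun (x : ℕ → Bool) (m : ℕ) => e x (seg x m) := by
  let _ : MeasurableSpace (List Bool) := ⊤
  refine measurable_pi_lambda _ fun m => measurable_apply_of_countable he ?_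
  have restrict : Measurable fun (x : ℕ → Bool) (i : Fin m) => x i :=
    measurable_pi_lambda _ fun i => measurable_pi_apply _
  exact (Measurable.of_discrete (f := List.ofFn)).comp restrict

theorem measurable_boolIndicator_range {ι α : Type*} [Countable ι] [MeasurableSpace α]
    [MeasurableSingletonClass α] : Measurable fun g : ι → α => (Set.range g).boolIndicator := by
  refine measurable_pi_lambda _ fun a => measurable_to_bool ?_
  have : (fun g : ι → α => (Set.range g).boolIndicator a) ⁻¹' {true} =
      ⋃ i, (fun g => g i) ⁻¹' {a} := by
    ext g
    simp [← Set.mem_iff_boolIndicator]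
  rw [this]
  exact .iUnion fun i => measurable_pi_apply i (measurableSet_singleton a)

theorem measurableSet_infiniteB {α : Type} [Countable α] :
    MeasurableSet {x : α → Bool | InfiniteB x} := by
  have suppB_injective : Injective (suppB : (α → Bool) → Set α) := fun x y h =>
    funext fun a => Bool.eq_iff_iff.mpr (Set.ext_iff.mp h a)
  have hfin : {x : α → Bool | (suppB x).Finite}.Countable :=
    Set.Countable.ofPred_finite.preimage suppB_injective
  exact hfin.measurableSet.compl

end Measurability

/-- The colouring of `ℕ` that colours the `j`-th element of `b` by the first component of the pair
coded by `j`, so that every colour recurs infinitely often on `b` when `b` is infinite. A number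
outside `b` gets the colour of the next element of `b`. -/
def recurrentColoring (b : ℕ → Bool) (m : ℕ) : ℕ :=
  (Nat.unpair (Nat.count (fun k => b k = true) m)).1

theorem measurable_recurrentColoring : Measurable recurrentColoring := by
  have measurable_count (m : ℕ) :
      Measurable fun b : ℕ → Bool => Nat.count (fun k => b k = true) m := by
    induction m with
    | zero => simp
    | succ m ih =>
      simp only [Nat.count_succ]
      exact ih.add (.ite (measurableSet_eq_fun (measurable_pi_apply m) measurable_const)
        measurable_const measurable_const)
  exact measurable_pi_lambda _ fun m =>
    (Measurable.of_discrete (f := fun n : ℕ => (Nat.unpair n).1)).comp (measurable_count m)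

theorem infinite_recurrentColoring_fiber {b : ℕ → Bool} (hb : InfiniteB b) (n : ℕ) :
    {m | recurrentColoring b m = n ∧ b m = true}.Infinite := by
  refine Set.infinite_of_injective_forall_mem
    (f := fun j => Nat.nth (fun k => b k = true) (Nat.pair n j)) ?_ fun j => ⟨?_, ?_⟩
  · exact (Nat.nth_injective hb).comp fun i j hij => (Nat.pair_eq_pair.mp hij).2
  · simp [recurrentColoring, Nat.count_nth_of_infinite hb]
  · exact Nat.nth_mem_of_infinite hb _

/-- A Borel uniform form of tallness, for sequences in place of infinite sets: some Borel map
sends each sequence `g` to a member of `I` that `g` visits infinitely often. Since `g` may be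
constant, this also forces `I` to cover `α`. -/
def IsBorelHitting {α : Type} [MeasurableSpace α] (I : Set (α → Bool)) : Prop :=
  ∃ P : (ℕ → α) → (α → Bool), Measurable P ∧
    ∀ g, P g ∈ I ∧ InfiniteB fun m => P g (g m)

section Hitting

variable {α : Type} [Countable α] [MeasurableSpace α] [MeasurableSingletonClass α]
  {I : Set (α → Bool)}

theorem IsBorelHitting.of_selector (hfin : ContainsFinB I)
    {S : (α → Bool) → (α → Bool)} (hS : Measurable S)
    (hsel : ∀ x : α → Bool, InfiniteB x → S x ∈ I ∧ InfiniteB (S x) ∧ subB (S x) x) :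
    IsBorelHitting I := by
  classical
  let R (g : ℕ → α) : α → Bool := (Set.range g).boolIndicator
  have mem_R {g : ℕ → α} {a : α} : R g a = true ↔ a ∈ Set.range g :=
    (Set.mem_iff_boolIndicator _ a).symm
  have hR : Measurable R := measurable_boolIndicator_range
  refine ⟨fun g => if InfiniteB (R g) then S (R g) else R g,
    .ite (hR measurableSet_infiniteB) (hS.comp hR) hR, fun g => ?_⟩
  by_cases hg : InfiniteB (R g)
  · obtain ⟨hSI, hSinf, hSsub⟩ := hsel _ hg
    simp only [if_pos hg]
    exact ⟨hSI, hSinf.preimage fun a ha => mem_R.mp (hSsub a ha)⟩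
  · simp only [if_neg hg]
    refine ⟨hfin _ (Set.not_infinite.mp hg), ?_⟩
    exact Set.infinite_univ.mono fun m _ => mem_R.mpr ⟨m, rfl⟩

theorem IsBorelHitting.exists_measurable_not_katLE_idealIc (hI : IsBorelHitting I) :
    ∃ c : (ℕ → Bool) → (ℕ → ℕ), Measurable c ∧ ¬ KatLE I (IdealIc c) := by
  rcases isEmpty_or_nonempty α with _ | _
  · exact ⟨0, measurable_const, fun ⟨f, _⟩ => isEmptyElim (f [])⟩
  obtain ⟨P, hP, hPhit⟩ := hI
  obtain ⟨e, he, hsurj⟩ := exists_measurable_surjective_natBool (List Bool → α)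
  let g (x : ℕ → Bool) (m : ℕ) : α := e x (seg x m)
  let hits (x : ℕ → Bool) (m : ℕ) : Bool := P (g x) (g x m)
  have hg : Measurable g := measurable_apply_seg he
  have hhits : Measurable hits := measurable_pi_lambda _ fun m =>
    measurable_apply_of_countable (f := P ∘ g) (hP.comp hg) ((measurable_pi_apply m).comp hg)
  refine ⟨fun x => recurrentColoring (hits x), measurable_recurrentColoring.comp hhits,
    not_katLE_idealIc_of_frequently_infinite_fiber fun f => ?_⟩
  obtain ⟨x, rfl⟩ := hsurj f
  obtain ⟨hPI, hinf⟩ := hPhit (g x)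
  exact ⟨P (g x), hPI, x, .of_forall (infinite_recurrentColoring_fiber hinf)⟩

end Hitting

theorem selector_gives_not_katetov_below_general {α : Type} [Countable α] (I : Set (α → Bool))
    (hfin : ContainsFinB I) (S : (α → Bool) → (α → Bool)) (hS : Measurable S)
    (hsel : ∀ x : α → Bool, InfiniteB x → S x ∈ I ∧ InfiniteB (S x) ∧ subB (S x) x) :
    ∃ c : (ℕ → Bool) → (ℕ → ℕ), Measurable c ∧ ¬ KatLE I (IdealIc c) := by
  let _ : MeasurableSpace α := ⊤
  exact (IsBorelHitting.of_selector hfin hS hsel).exists_measurable_not_katLE_idealIc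

/-- If `I` is a tall Borel ideal on `ℕ` (containing all finite sets) admitting a Borel selector,
then there is a Borel function `c : 2^ℕ → ℕ^ℕ` such that `I ≰_K I_c`. -/
theorem selector_gives_not_katetov_below (I : Set (ℕ → Bool)) (hI : IsIdealB I)
    (hfin : ContainsFinB I) (htall : IsTallB I) (hB : MeasurableSet I)
    (S : (ℕ → Bool) → (ℕ → Bool)) (hS : Measurable S)
    (hsel : ∀ x : ℕ → Bool, InfiniteB x → S x ∈ I ∧ InfiniteB (S x) ∧ subB (S x) x) :
    ∃ c : (ℕ → Bool) → (ℕ → ℕ), Measurable c ∧ ¬ KatLE I (IdealIc c) :=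
  selector_gives_not_katetov_below_general I hfin S hS hsel
end

section
/- For every compact K ⊆ 2^ℕ there is a Borel function φ : I_K → K^{<ω} (finite tuples of elements of K) such that for every x ∈ I_K, x ⊆ y₀ ∪ … ∪ y_k where φ(x) = (y₀,…,y_k). -/
/-- `⟨K⟩ⁿ`: unions of `n+1` elements of `K`. -/
def angleB (K : Set (ℕ → Bool)) (n : ℕ) : Set (ℕ → Bool) :=
  {x | ∃ f : Fin (n + 1) → (ℕ → Bool), (∀ i, f i ∈ K) ∧ ∀ m, x m = true ↔ ∃ i, f i m = true}

/-- `↓M`: downward closure of `M`. -/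
def downB (M : Set (ℕ → Bool)) : Set (ℕ → Bool) := {x | ∃ y ∈ M, subB x y}

/-- `I_K = ⋃ₙ ↓⟨K⟩ⁿ`. -/
def IdealOfCode (K : Set (ℕ → Bool)) : Set (ℕ → Bool) := ⋃ n, downB (angleB K n)


/-!
For fixed `n`, the pairs `(x, y)` such that `y₀, …, y_{n-1} ∈ K` cover `x` form a closed set, and
its second coordinate ranges over a compact space. Hence being covered by `n` elements of `K` is a
closed condition on `x`, the least such `n` is a Borel function of `x`, and what remains is to
choose a point measurably from a nonempty closed set `F x` of covers. To choose it, run through a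
sequence of closed sets `D n` generating the Borel sets, replacing the current set by its
intersection with `D n` whenever that is nonempty. By compactness some point `f x` survives all the
steps, and `f x ∈ D n` iff the set present at step `n` met `D n`, which is a measurable condition
on `x`.
-/

open Set TopologicalSpace

section Selection

variable {X Y : Type*}

/-- The set `s ∩ D` if `s` meets `D`, and `s` otherwise: one step of the construction of a
measurable selection. -/
def interIfMeets (s D : Set Y) : Set Y := {y ∈ s | (s ∩ D).Nonempty → y ∈ D}

theorem interIfMeets_subset (s D : Set Y) : interIfMeets s D ⊆ s := sep_subset _ _

theorem mem_iff_nonempty_of_mem_interIfMeets {s D : Set Y} {y : Y} (hy : y ∈ interIfMeets s D) :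
    y ∈ D ↔ (s ∩ D).Nonempty :=
  ⟨fun hyD => ⟨y, hy.1, hyD⟩, hy.2⟩

theorem interIfMeets_inter_nonempty_iff {s D E : Set Y} :
    (interIfMeets s D ∩ E).Nonempty ↔
      ((s ∩ D).Nonempty → (s ∩ (D ∩ E)).Nonempty) ∧ (s ∩ E).Nonempty := by
  constructor
  · rintro ⟨y, hy, hyE⟩
    exact ⟨fun hD => ⟨y, hy.1, hy.2 hD, hyE⟩, y, hy.1, hyE⟩
  · rintro ⟨hDE, y, hys, hyE⟩
    by_cases hD : (s ∩ D).Nonempty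
    · obtain ⟨z, hzs, hzD, hzE⟩ := hDE hD
      exact ⟨z, ⟨hzs, fun _ => hzD⟩, hzE⟩
    · exact ⟨y, ⟨hys, fun h => absurd h hD⟩, hyE⟩

theorem interIfMeets_nonempty {s : Set Y} (hs : s.Nonempty) (D : Set Y) :
    (interIfMeets s D).Nonempty := by
  simpa using interIfMeets_inter_nonempty_iff (E := univ).2 (by simpa using hs)

theorem isClosed_interIfMeets [TopologicalSpace Y] {s D : Set Y} (hs : IsClosed s)
    (hD : IsClosed D) : IsClosed (interIfMeets s D) :=
  hs.and (isClosed_imp isOpen_const hD)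

/-- The sets obtained from `s` by applying `interIfMeets` with `D 0`, `D 1`, … in turn. -/
def interIfMeetsSeq (D : ℕ → Set Y) (s : Set Y) : ℕ → Set Y
  | 0 => s
  | n + 1 => interIfMeets (interIfMeetsSeq D s n) (D n)

theorem nonempty_iInter_interIfMeetsSeq [TopologicalSpace Y] [CompactSpace Y] {D : ℕ → Set Y}
    {s : Set Y} (hD : ∀ n, IsClosed (D n)) (hs : IsClosed s) (hne : s.Nonempty) :
    (⋂ n, interIfMeetsSeq D s n).Nonempty := by
  have nonempty (n : ℕ) : (interIfMeetsSeq D s n).Nonempty := by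
    induction n with
    | zero => exact hne
    | succ n ih => exact interIfMeets_nonempty ih (D n)
  have closed (n : ℕ) : IsClosed (interIfMeetsSeq D s n) := by
    induction n with
    | zero => exact hs
    | succ n ih => exact isClosed_interIfMeets ih (hD n)
  exact IsCompact.nonempty_iInter_of_sequence_nonempty_isCompact_isClosed _
    (fun n => interIfMeets_subset _ (D n)) nonempty hs.isCompact closed

theorem mem_iff_nonempty_of_mem_iInter_interIfMeetsSeq {D : ℕ → Set Y} {s : Set Y} {y : Y}
    (hy : y ∈ ⋂ n, interIfMeetsSeq D s n) (n : ℕ) :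
    y ∈ D n ↔ (interIfMeetsSeq D s n ∩ D n).Nonempty :=
  mem_iff_nonempty_of_mem_interIfMeets (mem_iInter.1 hy (n + 1))

variable [MeasurableSpace X] [TopologicalSpace Y]

/-- A set-valued map `F` is a measurable multifunction if the points `x` at which `F x` meets
a given closed set form a measurable set; this is the hypothesis for measurable selection. Asking
this of open sets instead is known as weak measurability. -/
def IsMeasurableMultifunction (F : X → Set Y) : Prop :=
  ∀ ⦃D : Set Y⦄, IsClosed D → MeasurableSet {x | (F x ∩ D).Nonempty}

namespace IsMeasurableMultifunction

variable {F : X → Set Y}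

protected theorem interIfMeets (hF : IsMeasurableMultifunction F) {D : Set Y} (hD : IsClosed D) :
    IsMeasurableMultifunction fun x => interIfMeets (F x) D := by
  intro E hE
  simp only [interIfMeets_inter_nonempty_iff]
  exact ((hF hD).himp (hF (hD.inter hE))).inter (hF hE)

protected theorem interIfMeetsSeq (hF : IsMeasurableMultifunction F) {D : ℕ → Set Y}
    (hD : ∀ n, IsClosed (D n)) (n : ℕ) :
    IsMeasurableMultifunction fun x => interIfMeetsSeq D (F x) n := by
  induction n with
  | zero => exact hF
  | succ n ih => exact ih.interIfMeets (hD n)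

theorem of_isClosed [TopologicalSpace X] [OpensMeasurableSpace X] [CompactSpace Y]
    {C : Set (X × Y)} (hC : IsClosed C) :
    IsMeasurableMultifunction fun x => {y | (x, y) ∈ C} := by
  intro D hD
  have closed_proj : IsClosed (Prod.fst '' (C ∩ Prod.snd ⁻¹' D)) :=
    isClosedMap_fst_of_compactSpace _ (hC.inter (hD.preimage continuous_snd))
  convert closed_proj.measurableSet
  ext x
  simp [Set.Nonempty]

variable [CompactSpace Y] [SecondCountableTopology Y] [MeasurableSpace Y] [BorelSpace Y]

theorem exists_measurable_selection (hF : IsMeasurableMultifunction F)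
    (hclosed : ∀ x, IsClosed (F x)) (hne : ∀ x, (F x).Nonempty) :
    ∃ f : X → Y, Measurable f ∧ ∀ x, f x ∈ F x := by
  obtain ⟨U, hU⟩ := exists_seq_basis Y
  have hD (n : ℕ) : IsClosed (U n)ᶜ := (hU.isOpen (mem_range_self n)).isClosed_compl
  choose f hf using fun x => nonempty_iInter_interIfMeetsSeq hD (hclosed x) (hne x)
  have preimage_compl (n : ℕ) : MeasurableSet (f ⁻¹' (U n)ᶜ) := by
    convert hF.interIfMeetsSeq hD n (hD n) using 1
    ext x
    exact mem_iff_nonempty_of_mem_iInter_interIfMeetsSeq (hf x) n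
  refine ⟨f, ?_, fun x => mem_iInter.1 (hf x) 0⟩
  rw [BorelSpace.measurable_eq (α := Y), hU.borel_eq_generateFrom]
  refine measurable_generateFrom ?_
  rintro _ ⟨n, rfl⟩
  exact (preimage_compl n).of_compl

end IsMeasurableMultifunction

theorem exists_measurable_uniformization_iUnion_isClosed [TopologicalSpace X]
    [OpensMeasurableSpace X] [CompactSpace Y] [SecondCountableTopology Y] [MeasurableSpace Y]
    [BorelSpace Y] {C : ℕ → Set (X × Y)} (hC : ∀ n, IsClosed (C n))
    (hne : ∀ x, ∃ n y, (x, y) ∈ C n) :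
    ∃ (l : X → ℕ) (f : X → Y), Measurable l ∧ Measurable f ∧ ∀ x, (x, f x) ∈ C (l x) := by
  classical
  have hF (n : ℕ) : IsMeasurableMultifunction fun x => {y | (x, y) ∈ C n} := .of_isClosed (hC n)
  have hdom (n : ℕ) : MeasurableSet {x | ∃ y, (x, y) ∈ C n} := by
    simpa [Set.Nonempty] using hF n isClosed_univ
  have hleast : IsMeasurableMultifunction fun x => {y | (x, y) ∈ C (Nat.find (hne x))} :=
    fun D hD => measurableSet_setOfPred.2 <|
      Measurable.find (fun n => measurableSet_setOfPred.1 (hF n hD)) hdom hne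
  obtain ⟨f, hf, hfC⟩ := hleast.exists_measurable_selection
    (fun x => (hC _).preimage (Continuous.prodMk_right x)) fun x => Nat.find_spec (hne x)
  exact ⟨fun x => Nat.find (hne x), f, measurable_find hne hdom, hf, hfC⟩

end Selection

/-- The covers of `x` by `n` elements of `K`. A tuple of length `n` is coded by a sequence of which
only the first `n` entries matter, so that the codes for all `n` lie in one compact space. -/
def tupleCovers {α : Type*} (K : Set (α → Bool)) (n : ℕ) (x : α → Bool) : Set (ℕ → α → Bool) :=
  {y | (∀ i < n, y i ∈ K) ∧ ∀ a, x a = true → ∃ i < n, y i a = true}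

theorem isClosed_graph_tupleCovers {α : Type*} {K : Set (α → Bool)} (hK : IsClosed K) (n : ℕ) :
    IsClosed {p : (α → Bool) × (ℕ → α → Bool) | p.2 ∈ tupleCovers K n p.1} := by
  have entries : IsClosed {p : (α → Bool) × (ℕ → α → Bool) | ∀ i < n, p.2 i ∈ K} := by
    simp only [ofPred_forall]
    exact isClosed_iInter fun i => isClosed_iInter fun _ => hK.preimage (by fun_prop)
  have covers : IsClosed {p : (α → Bool) × (ℕ → α → Bool) |
      ∀ a, p.1 a = true → ∃ i < n, p.2 i a = true} := by
    simp only [ofPred_forall]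
    refine isClosed_iInter fun a => isClosed_imp ?_ ?_
    · exact (isOpen_discrete {true}).preimage
        (by fun_prop : Continuous fun p : (α → Bool) × (ℕ → α → Bool) => p.1 a)
    · simp only [← exists_prop, ofPred_exists]
      exact (finite_Iio n).isClosed_biUnion fun i _ => isClosed_eq (by fun_prop) (by fun_prop)
  exact entries.and covers

theorem exists_nonempty_tupleCovers_of_mem_idealOfCode {K : Set (ℕ → Bool)} {x : ℕ → Bool}
    (hx : x ∈ IdealOfCode K) : ∃ n, (tupleCovers K n x).Nonempty := by
  obtain ⟨n, y, ⟨f, hfK, hfy⟩, hxy⟩ := mem_iUnion.1 hx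
  refine ⟨n + 1, fun i => f (Fin.ofNat (n + 1) i), fun _ _ => hfK _, fun m hm => ?_⟩
  obtain ⟨i, hi⟩ := (hfy m).1 (hxy m hm)
  exact ⟨i, i.isLt, by simpa using hi⟩

/-- For every compact `K ⊆ 2^ℕ` there is a Borel map `φ` on `I_K` assigning to each `x ∈ I_K` a
finite tuple of elements of `K` whose union covers `x` (the tuple is coded by its length `l` and
entries `φ · 0, …, φ · (l-1)`). -/
theorem borel_cover_by_tuples (K : Set (ℕ → Bool)) (hK : IsCompact K) :
    ∃ (l : ↥(IdealOfCode K) → ℕ) (φ : ↥(IdealOfCode K) → ℕ → (ℕ → Bool)),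
      Measurable l ∧ Measurable φ ∧
      ∀ x : ↥(IdealOfCode K),
        (∀ i < l x, φ x i ∈ K) ∧
        ∀ m : ℕ, (x : ℕ → Bool) m = true → ∃ i < l x, φ x i m = true := by
  obtain ⟨l, φ, hl, hφ, hcover⟩ := exists_measurable_uniformization_iUnion_isClosed
    (C := fun n => {p : IdealOfCode K × (ℕ → ℕ → Bool) | p.2 ∈ tupleCovers K n p.1})
    (fun n => (isClosed_graph_tupleCovers hK.isClosed n).preimage
      (f := Prod.map Subtype.val id) (by fun_prop))
    (fun x => exists_nonempty_tupleCovers_of_mem_idealOfCode x.2)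
  exact ⟨l, φ, hl, hφ, hcover⟩
end

section
/- The Solecki ideal S has a Borel selector: there is a Borel function S : P(Ω) → P(Ω) such that for every infinite X ⊆ Ω, S(X) is an infinite subset of X belonging to the Solecki ideal. -/
open MeasureTheory

/-!
Enumerate the sets of `Ω` as `d 0, d 1, …`, so that a subset of `Ω` becomes a set `A ⊆ ℕ`. Since
the `d n` have measure bounded below by some `c > 0`, reverse Fatou shows for infinite `A` that the
points lying in `d n` for infinitely many `n ∈ A` form a set `L` of measure at least `c`. Run
through `n ∈ A` and keep `n` whenever `d n` meets the intersection of `L` with the sets kept so far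
in positive measure. These intersections are never null, so by compactness all the sets kept share
a point `x`: the selection is contained in `E_x`. Were it finite, the final intersection would be a
non-null subset of `L` meeting each later `d n`, `n ∈ A`, in a null set, although those `d n` cover
it. The selection is Borel in `A` because the measure of a section of a Borel set in a product is a
Borel function.
-/

open Filter Set TopologicalSpace
open scoped ENNReal

theorem countable_setOf_isCompact_isOpen (X : Type*) [TopologicalSpace X]
    [SecondCountableTopology X] : {U : Set X | IsCompact U ∧ IsOpen U}.Countable := by
  refine (countable_range fun t : Finset (countableBasis X) =>
    ⋃₀ ((↑) '' (t : Set (countableBasis X)))).mono fun U hU => ?_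
  obtain ⟨t, rfl⟩ := eq_sUnion_finset_of_isTopologicalBasis_of_isCompact_open _
    (isBasis_countableBasis X) U hU.1 hU.2
  exact ⟨t, rfl⟩

theorem measurable_setOf_eq_true {ι : Type*} :
    Measurable fun X : ι → Bool => {i | X i = true} :=
  measurable_set_iff.2 fun i =>
    measurableSet_setOfPred.1 <| measurableSet_eq_fun (measurable_pi_apply i) measurable_const

open scoped Classical in
theorem measurable_decide_mem {ι : Type*} : Measurable fun (A : Set ι) i => decide (i ∈ A) :=
  measurable_pi_lambda _ fun i => measurable_to_bool <| by
    simpa [preimage] using measurableSet_mem i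

section Limsup

variable {α : Type*} [MeasurableSpace α] {μ : Measure α} {d : ℕ → Set α} {p : ℕ → Prop}

theorem le_measure_blimsup [IsFiniteMeasure μ] (hd : ∀ n, p n → MeasurableSet (d n)) {c : ℝ≥0∞}
    (hc : ∃ᶠ n in atTop, p n ∧ c ≤ μ (d n)) : c ≤ μ (blimsup d atTop p) := by
  simp only [blimsup_eq_iInf_biSup_of_nat, iSup_eq_iUnion, iInf_eq_iInter]
  rw [Antitone.measure_iInter]
  · refine le_iInf fun m => ?_
    obtain ⟨n, hmn, hpn, hcn⟩ := frequently_atTop.1 hc m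
    exact hcn.trans (measure_mono (subset_biUnion_of_mem (u := d) ⟨hpn, hmn⟩))
  · exact fun k m hkm => biUnion_subset_biUnion_left fun n hn => ⟨hn.1, hkm.trans hn.2⟩
  · exact fun m => (MeasurableSet.biUnion (to_countable _) fun n hn =>
      hd n hn.1).nullMeasurableSet
  · exact ⟨0, measure_ne_top μ _⟩

theorem frequently_measure_inter_ne_zero_of_subset_blimsup {K : Set α} (hK : K ⊆ blimsup d atTop p)
    (hμK : μ K ≠ 0) : ∃ᶠ n in atTop, p n ∧ μ (K ∩ d n) ≠ 0 := by
  refine frequently_atTop.2 fun m => ?_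
  by_contra! hnull
  have hcover : K ⊆ ⋃ n ∈ {n | p n ∧ m ≤ n}, K ∩ d n := by
    rw [← inter_iUnion₂]
    refine subset_inter Subset.rfl (hK.trans ?_)
    simp only [blimsup_eq_iInf_biSup_of_nat, iSup_eq_iUnion, iInf_eq_iInter]
    exact iInter_subset _ m
  refine hμK (measure_mono_null hcover ?_)
  exact (measure_biUnion_null_iff (to_countable _)).2 fun n hn => hnull n hn.2 hn.1

theorem measurableSet_setOf_mem_blimsup (hd : ∀ n, MeasurableSet (d n)) :
    MeasurableSet {q : Set ℕ × α | q.2 ∈ blimsup d atTop (· ∈ q.1)} := by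
  have hlimsup : {q : Set ℕ × α | q.2 ∈ blimsup d atTop (· ∈ q.1)} =
      ⋂ m, ⋃ n ≥ m, {A : Set ℕ | n ∈ A} ×ˢ d n := by
    ext q
    simp [blimsup_eq_iInf_biSup_of_nat, and_assoc, and_left_comm]
  rw [hlimsup]
  exact .iInter fun m => .iUnion fun n => .iUnion fun _ => (measurableSet_mem n).prod (hd n)

end Limsup

section Greedy

variable {α : Type*} [MeasurableSpace α]

/-- The set of candidates for a common point after the greedy choice has decided the indices below
`n`: the points lying in `d k` for infinitely many `k ∈ A`, and in `d k` for every `k < n` that was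
selected. Testing `k` against this set, rather than against the intersection of the selected sets
alone, is what keeps infinitely many later indices eligible. -/
def greedyCore (μ : Measure α) (d : ℕ → Set α) (A : Set ℕ) : ℕ → Set α
  | 0 => blimsup d atTop (· ∈ A)
  | n + 1 => {x ∈ greedyCore μ d A n | n ∈ A → μ (greedyCore μ d A n ∩ d n) ≠ 0 → x ∈ d n}

/-- The indices kept by the greedy choice from `A`. It is infinite, with the corresponding `d n`
having the finite intersection property, as soon as `blimsup d atTop (· ∈ A)` is not null. -/
def greedySelection (μ : Measure α) (d : ℕ → Set α) (A : Set ℕ) : Set ℕ :=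
  {n ∈ A | μ (greedyCore μ d A n ∩ d n) ≠ 0}

variable {μ : Measure α} {d : ℕ → Set α} {A : Set ℕ}

theorem greedySelection_subset : greedySelection μ d A ⊆ A :=
  sep_subset _ _

theorem greedyCore_succ_of_mem {n : ℕ} (hn : n ∈ greedySelection μ d A) :
    greedyCore μ d A (n + 1) = greedyCore μ d A n ∩ d n := by
  ext x
  simp [greedyCore, hn.1, hn.2]

theorem greedyCore_succ_of_notMem {n : ℕ} (hn : n ∉ greedySelection μ d A) :
    greedyCore μ d A (n + 1) = greedyCore μ d A n :=
  sep_eq_self_iff_mem_true.2 fun _ _ hA hμ => absurd ⟨hA, hμ⟩ hn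

theorem antitone_greedyCore : Antitone (greedyCore μ d A) :=
  antitone_nat_of_succ_le fun _ => sep_subset _ _

theorem greedyCore_subset_blimsup (n : ℕ) : greedyCore μ d A n ⊆ blimsup d atTop (· ∈ A) :=
  antitone_greedyCore n.zero_le

theorem greedyCore_subset_of_mem {k n : ℕ} (hk : k ∈ greedySelection μ d A) (hkn : k < n) :
    greedyCore μ d A n ⊆ d k :=
  calc
    greedyCore μ d A n ⊆ greedyCore μ d A (k + 1) := antitone_greedyCore hkn
    _ = greedyCore μ d A k ∩ d k := greedyCore_succ_of_mem hk
    _ ⊆ d k := inter_subset_right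

theorem measure_greedyCore_ne_zero (hA : μ (blimsup d atTop (· ∈ A)) ≠ 0) (n : ℕ) :
    μ (greedyCore μ d A n) ≠ 0 := by
  induction n with
  | zero => exact hA
  | succ n ih =>
    by_cases hn : n ∈ greedySelection μ d A
    · rw [greedyCore_succ_of_mem hn]
      exact hn.2
    · rwa [greedyCore_succ_of_notMem hn]

theorem infinite_greedySelection (hA : μ (blimsup d atTop (· ∈ A)) ≠ 0) :
    (greedySelection μ d A).Infinite := by
  by_contra hfin
  obtain ⟨N, hN⟩ : ∃ N, ∀ n ≥ N, n ∉ greedySelection μ d A :=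
    eventually_atTop.1 <| not_frequently.1 <| mt Nat.frequently_atTop_iff_infinite.1 hfin
  have hconst : ∀ n ≥ N, greedyCore μ d A n = greedyCore μ d A N := fun n hn => by
    induction n, hn using Nat.le_induction with
    | base => rfl
    | succ n hn ih => rw [greedyCore_succ_of_notMem (hN n hn), ih]
  obtain ⟨n, hn, hnA, hpos⟩ := frequently_atTop.1
    (frequently_measure_inter_ne_zero_of_subset_blimsup (greedyCore_subset_blimsup N)
      (measure_greedyCore_ne_zero hA N)) N
  exact hN n hn ⟨hnA, by rwa [hconst n hn]⟩

theorem nonempty_biInter_greedySelection [TopologicalSpace α] [CompactSpace α]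
    (hd : ∀ n, IsClosed (d n)) (hA : μ (blimsup d atTop (· ∈ A)) ≠ 0) :
    (⋂ n ∈ greedySelection μ d A, d n).Nonempty := by
  rw [biInter_eq_iInter]
  refine CompactSpace.iInter_nonempty (fun n => hd n) fun s => ?_
  obtain ⟨N, hN⟩ := (s.image Subtype.val).exists_nat_subset_range
  refine (nonempty_of_measure_ne_zero (measure_greedyCore_ne_zero hA N)).mono ?_
  exact subset_iInter₂ fun n hn => greedyCore_subset_of_mem n.2
    (Finset.mem_range.1 (hN (Finset.mem_image_of_mem _ hn)))

theorem measurableSet_setOf_mem_greedySelection [SFinite μ] {n : ℕ} (hd : MeasurableSet (d n))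
    (hcore : MeasurableSet {q : Set ℕ × α | q.2 ∈ greedyCore μ d q.1 n}) :
    MeasurableSet {A | n ∈ greedySelection μ d A} :=
  (measurableSet_mem n).inter <| measurable_measure_prodMk_left (hcore.inter (measurable_snd hd))
    (measurableSet_singleton 0).compl

theorem measurableSet_setOf_mem_greedyCore [SFinite μ] (hd : ∀ n, MeasurableSet (d n)) (n : ℕ) :
    MeasurableSet {q : Set ℕ × α | q.2 ∈ greedyCore μ d q.1 n} := by
  induction n with
  | zero => exact measurableSet_setOf_mem_blimsup hd
  | succ n ih =>
    have hsucc : {q : Set ℕ × α | q.2 ∈ greedyCore μ d q.1 (n + 1)} =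
        {q | q.2 ∈ greedyCore μ d q.1 n} ∩
          ({q | n ∈ greedySelection μ d q.1}ᶜ ∪ {q | q.2 ∈ d n}) := by
      ext q
      simp [greedyCore, greedySelection, imp_iff_not_or, or_assoc, and_or_left]
    rw [hsucc]
    have hsel := measurableSet_setOf_mem_greedySelection (hd n) ih
    exact ih.inter ((measurable_fst hsel).compl.union (measurable_snd (hd n)))

theorem measurable_greedySelection [SFinite μ] (hd : ∀ n, MeasurableSet (d n)) :
    Measurable (greedySelection μ d) :=
  measurable_set_iff.2 fun n => measurableSet_setOfPred.1 <|
    measurableSet_setOf_mem_greedySelection (hd n) (measurableSet_setOf_mem_greedyCore hd n)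

end Greedy

section Selector

variable {α ι : Type*} [TopologicalSpace α] [CompactSpace α] [MeasurableSpace α]
  [OpensMeasurableSpace α] (μ : Measure α) [IsFiniteMeasure μ] [Countable ι] {d : ι → Set α}
  {c : ℝ≥0∞}

theorem exists_measurable_infinite_subset_nonempty_biInter (hd : ∀ i, IsClosed (d i)) (hc : c ≠ 0)
    (hμd : ∀ i, c ≤ μ (d i)) :
    ∃ S : Set ι → Set ι, Measurable S ∧
      ∀ A : Set ι, A.Infinite → S A ⊆ A ∧ (S A).Infinite ∧ (⋂ i ∈ S A, d i).Nonempty := by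
  rcases finite_or_infinite ι with _ | _
  · exact ⟨id, measurable_id, fun A hA => absurd A.toFinite hA⟩
  obtain ⟨e⟩ : Nonempty (ℕ ≃ ι) := nonempty_equiv_of_countable
  have hclosed (n : ℕ) : IsClosed (d (e n)) := hd _
  have hmeas (n : ℕ) : MeasurableSet (d (e n)) := (hclosed n).measurableSet
  refine ⟨fun A => e.symm ⁻¹' greedySelection μ (d ∘ e) (e ⁻¹' A), ?_, fun A hA => ?_⟩
  · have hpreimage : Measurable fun A : Set ι => e ⁻¹' A :=
      measurable_set_iff.2 fun n => measurable_set_mem (e n)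
    exact measurable_set_iff.2 fun i =>
      measurable_set_iff.1 ((measurable_greedySelection hmeas).comp hpreimage) (e.symm i)
  have hlimsup : c ≤ μ (blimsup (d ∘ e) atTop (· ∈ e ⁻¹' A)) :=
    le_measure_blimsup (fun n _ => hmeas n) <|
      (Nat.frequently_atTop_iff_infinite.2 (hA.preimage (by simp))).mono fun n hn => ⟨hn, hμd _⟩
  have hpos : μ (blimsup (d ∘ e) atTop (· ∈ e ⁻¹' A)) ≠ 0 := (hc.bot_lt.trans_le hlimsup).ne'
  refine ⟨fun i hi => ?_, (infinite_greedySelection hpos).preimage (by simp), ?_⟩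
  · simpa using greedySelection_subset hi
  · obtain ⟨x, hx⟩ := nonempty_biInter_greedySelection hclosed hpos
    exact ⟨x, mem_iInter₂.2 fun i hi => by simpa using mem_iInter₂.1 hx (e.symm i) hi⟩

theorem solecki_has_borel_selector_general (hd : ∀ i, IsClosed (d i)) (hc : c ≠ 0)
    (hμd : ∀ i, c ≤ μ (d i)) :
    ∃ S : (ι → Bool) → (ι → Bool), Measurable S ∧
      ∀ X : ι → Bool, {i | X i = true}.Infinite →
        (∃ x, ∀ i, S X i = true → x ∈ d i) ∧
        {i | S X i = true}.Infinite ∧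
        ∀ i, S X i = true → X i = true := by
  classical
  obtain ⟨S, hS, hsel⟩ := exists_measurable_infinite_subset_nonempty_biInter μ hd hc hμd
  refine ⟨fun X i => decide (i ∈ S {j | X j = true}),
    measurable_decide_mem.comp (hS.comp measurable_setOf_eq_true), fun X hX => ?_⟩
  obtain ⟨hsub, hinf, x, hx⟩ := hsel _ hX
  simp only [decide_eq_true_eq]
  exact ⟨⟨x, mem_iInter₂.1 hx⟩, hinf, hsub⟩

end Selector

/-- The Solecki ideal has a Borel selector.  Here `μ` is the uniform product (coin-flipping)
measure on `2^ℕ` (characterized on cylinders), `Ω` is the countable set of clopen subsets of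
`2^ℕ` of measure `1/2` (as a subtype), subsets of `Ω` are coded by characteristic functions,
and membership of a set in the Solecki ideal is written out: it is covered by finitely many sets
`E_x = {D ∈ Ω : x ∈ D}` together with a finite set. -/
theorem solecki_has_borel_selector (μ : Measure (ℕ → Bool))
    (hprob : IsProbabilityMeasure μ)
    (hcyl : ∀ l : List Bool,
      μ {x : ℕ → Bool | ∀ i : Fin l.length, x i = l.get i} = (2 : ENNReal)⁻¹ ^ l.length) :
    ∃ S : ({D : Set (ℕ → Bool) // IsClopen D ∧ μ D = 2⁻¹} → Bool) →
          ({D : Set (ℕ → Bool) // IsClopen D ∧ μ D = 2⁻¹} → Bool),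
      Measurable S ∧
      ∀ X : {D : Set (ℕ → Bool) // IsClopen D ∧ μ D = 2⁻¹} → Bool,
        {D | X D = true}.Infinite →
          (∃ (T : Finset (ℕ → Bool))
             (F0 : Set {D : Set (ℕ → Bool) // IsClopen D ∧ μ D = 2⁻¹}),
              F0.Finite ∧
              ∀ D, S X D = true → D ∈ F0 ∨ ∃ x ∈ T, x ∈ (D : Set (ℕ → Bool))) ∧
          {D | S X D = true}.Infinite ∧
          ∀ D, S X D = true → X D = true := by
  have hclopen : {D : Set (ℕ → Bool) | IsClopen D}.Countable :=
    (countable_setOf_isCompact_isOpen (ℕ → Bool)).mono fun _ hD =>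
      And.intro hD.isClosed.isCompact hD.isOpen
  have : Countable {D : Set (ℕ → Bool) // IsClopen D ∧ μ D = 2⁻¹} :=
    (hclopen.mono fun _ hD => hD.1).to_subtype
  obtain ⟨S, hS, hsel⟩ := solecki_has_borel_selector_general μ
    (d := fun D : {D : Set (ℕ → Bool) // IsClopen D ∧ μ D = 2⁻¹} => (D : Set (ℕ → Bool)))
    (fun D => D.2.1.isClosed) (c := 2⁻¹) (by simp) fun D => D.2.2.ge
  refine ⟨S, hS, fun X hX => ?_⟩
  obtain ⟨⟨x, hx⟩, hinf, hsub⟩ := hsel X hX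
  exact ⟨⟨{x}, ∅, finite_empty, fun D hD => .inr ⟨x, by simp, hx D hD⟩⟩, hinf, hsub⟩
end

section
/- Let I be an ideal on ℕ that is not ω-hitting, and let g : [ℕ]^∞ → P(ℕ) be a continuous function (where [ℕ]^∞, the infinite subsets of ℕ, and P(ℕ) carry the subspace/Cantor topology of 2^ℕ) such that g(A) ⊆ A for every infinite A ⊆ ℕ. Then there exists an infinite B ⊆ ℕ with g(B) ∉ I. In particular, an ideal admitting a continuous selector is ω-hitting. -/
/-- The set `[ℕ]^∞` of (characteristic functions of) infinite subsets of `ℕ`, as a subspace of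
the Cantor space. -/
def InfiniteSets : Set (ℕ → Bool) := {x | (suppB x).Infinite}

/-- `I` is ω-hitting: for every countable family of infinite sets there is a member of `I`
meeting all of them. -/
def OmegaHitting (I : Set (ℕ → Bool)) : Prop :=
  ∀ X : ℕ → (ℕ → Bool), (∀ n, InfiniteB (X n)) →
    ∃ B ∈ I, ∀ n, ∃ m, B m = true ∧ X n m = true


/-!
The space `[ℕ]^∞` is a `Gδ` subset of the Cantor space, hence a Baire space. Let `X` be an
infinite set. The sets `A` whose image `g A` meets `X` form an open set by continuity of `g`, and a
dense one: the finite modifications `A` of `X` are dense in `[ℕ]^∞`, and for such `A` the infinite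
set `g A ∩ A` is contained in `X` up to finitely many points. So, given a sequence of infinite sets
`X n` which no member of `I` meets all at once, a generic `B` has an image `g B` meeting every
`X n`, and then `g B ∉ I`.
-/

open Filter Set

theorem dense_pi_setOf_eventually_cofinite_eq {ι : Type*} {π : ι → Type*}
    [∀ i, TopologicalSpace (π i)] (x : ∀ i, π i) :
    Dense {y : ∀ i, π i | ∀ᶠ i in cofinite, y i = x i} := by
  classical
  refine dense_iff_inter_open.2 fun U hU ⟨z, hz⟩ ↦ ?_
  obtain ⟨F, u, hu, hFU⟩ := isOpen_pi_iff.1 hU z hz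
  refine ⟨F.piecewise z x, hFU fun i hi ↦ ?_, ?_⟩
  · simpa [Finset.mem_coe.1 hi] using (hu i hi).2
  · filter_upwards [F.eventually_cofinite_notMem] with i hi
    exact F.piecewise_eq_of_notMem z x hi

section

variable {α : Type}

theorem InfiniteB.congr_cofinite {x y : α → Bool} (hx : InfiniteB x)
    (hyx : ∀ᶠ a in cofinite, y a = x a) : InfiniteB y :=
  frequently_cofinite_mem_iff_infinite.1 <|
    ((frequently_cofinite_mem_iff_infinite.2 hx).and_eventually hyx).mono fun _ ha ↦
      ha.2.trans ha.1

theorem InfiniteB.infinite_inter_suppB {x y : α → Bool} (hx : InfiniteB x) (hxy : subB x y) :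
    (suppB x ∩ suppB y).Infinite :=
  hx.mono fun a ha ↦ ⟨ha, hxy a ha⟩

theorem isOpen_setOf_suppB_inter_nonempty (s : Set α) :
    IsOpen {x : α → Bool | (suppB x ∩ s).Nonempty} := by
  have h_union : {x : α → Bool | (suppB x ∩ s).Nonempty} = ⋃ a ∈ s, {x | x a = true} := by
    ext x
    simp [Set.Nonempty, suppB, and_comm]
  rw [h_union]
  have h_coord (a : α) : Continuous fun x : α → Bool ↦ x a := continuous_apply a
  exact isOpen_biUnion fun a _ ↦ (isOpen_discrete {true}).preimage (h_coord a)

theorem isGδ_setOf_infiniteB [Countable α] : IsGδ {x : α → Bool | InfiniteB x} := by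
  have h_inter : {x : α → Bool | InfiniteB x} =
      ⋂ F : Finset α, {x | (suppB x ∩ (F : Set α)ᶜ).Nonempty} := by
    ext x
    refine ⟨fun hx ↦ mem_iInter.2 hx.exists_notMem_finset, fun hx hfin ↦ ?_⟩
    obtain ⟨a, ha, ha'⟩ := mem_iInter.1 hx hfin.toFinset
    exact ha' (hfin.mem_toFinset.2 ha)
  rw [h_inter]
  exact .iInter_of_isOpen fun _ ↦ isOpen_setOf_suppB_inter_nonempty _

theorem InfiniteB.dense_setOf_eventually_cofinite_eq {x : α → Bool} (hx : InfiniteB x) :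
    Dense {A : {y : α → Bool // InfiniteB y} | ∀ᶠ a in cofinite, A.1 a = x a} := by
  refine Subtype.dense_iff.2 fun y _ ↦ ?_
  refine closure_mono ?_ (dense_pi_setOf_eventually_cofinite_eq x y)
  exact fun z hz ↦ ⟨⟨z, hx.congr_cofinite hz⟩, hz, rfl⟩

theorem eventually_residual_suppB_inter_nonempty {g : {x : α → Bool // InfiniteB x} → α → Bool}
    (hg : Continuous g) (hgA : ∀ A, (suppB (g A) ∩ suppB A.1).Infinite)
    {x : α → Bool} (hx : InfiniteB x) :
    ∀ᶠ A in residual {y : α → Bool // InfiniteB y}, (suppB (g A) ∩ suppB x).Nonempty := by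
  refine residual_of_dense_open ((isOpen_setOf_suppB_inter_nonempty _).preimage hg) ?_
  refine hx.dense_setOf_eventually_cofinite_eq.mono fun A hA ↦ ?_
  have h_freq : ∃ᶠ a in cofinite, a ∈ suppB (g A) ∩ suppB A.1 :=
    frequently_cofinite_mem_iff_infinite.2 (hgA A)
  obtain ⟨a, ⟨haG, haA⟩, hax⟩ := (h_freq.and_eventually hA).exists
  exact ⟨a, haG, hax.symm.trans haA⟩

end

instance : BaireSpace InfiniteSets :=
  isGδ_setOf_infiniteB.baireSpace_of_t2Space_locallyCompactSpace

instance : Nonempty InfiniteSets :=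
  ⟨fun _ ↦ true, infinite_univ.mono fun _ _ ↦ rfl⟩

theorem eventually_residual_notMem_of_not_omegaHitting {I : Set (ℕ → Bool)}
    (hI : ¬ OmegaHitting I) {g : InfiniteSets → ℕ → Bool} (hg : Continuous g)
    (hgA : ∀ A : InfiniteSets, (suppB (g A) ∩ suppB A.1).Infinite) :
    ∀ᶠ B in residual InfiniteSets, g B ∉ I := by
  obtain ⟨X, hX, hIX⟩ : ∃ X : ℕ → ℕ → Bool, (∀ n, InfiniteB (X n)) ∧
      ∀ B ∈ I, ¬ ∀ n, (suppB B ∩ suppB (X n)).Nonempty := by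
    by_contra! h_hit
    exact hI h_hit
  have h_meets : ∀ᶠ B in residual InfiniteSets, ∀ n, (suppB (g B) ∩ suppB (X n)).Nonempty :=
    eventually_countable_forall.2 fun n ↦ eventually_residual_suppB_inter_nonempty hg hgA (hX n)
  exact h_meets.mono fun B hB hBI ↦ hIX (g B) hBI hB

theorem not_omegaHitting_no_continuous_selector_general {I : Set (ℕ → Bool)}
    (hI : ¬ OmegaHitting I) {g : InfiniteSets → ℕ → Bool} (hg : Continuous g)
    (hgA : ∀ A : InfiniteSets, (suppB (g A) ∩ suppB A.1).Infinite) :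
    ∃ B : InfiniteSets, g B ∉ I :=
  (dense_of_mem_residual (eventually_residual_notMem_of_not_omegaHitting hI hg hgA)).nonempty

/-- If an ideal `I` on `ℕ` is not ω-hitting, then for every continuous `g : [ℕ]^∞ → P(ℕ)` with
`g(A)` an infinite subset of `A` for all `A`, there is an infinite `B` with `g(B) ∉ I`.
In particular, an ideal admitting a continuous selector is ω-hitting. -/
theorem not_omegaHitting_no_continuous_selector :
    (∀ I : Set (ℕ → Bool), IsIdealB I → ¬ OmegaHitting I →
      ∀ g : ↥InfiniteSets → (ℕ → Bool), Continuous g →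
        (∀ A : ↥InfiniteSets, InfiniteB (g A) ∧ subB (g A) ↑A) →
        ∃ B : ↥InfiniteSets, g B ∉ I) ∧
    ∀ I : Set (ℕ → Bool), IsIdealB I →
      (∃ g : ↥InfiniteSets → (ℕ → Bool), Continuous g ∧
        ∀ A : ↥InfiniteSets, g A ∈ I ∧ InfiniteB (g A) ∧ subB (g A) ↑A) →
      OmegaHitting I :=
  ⟨fun _ _ hI _ hg hgA ↦ not_omegaHitting_no_continuous_selector_general hI hg
      fun A ↦ (hgA A).1.infinite_inter_suppB (hgA A).2,
    fun _ _ ⟨_, hg, hgA⟩ ↦ by_contra fun hI ↦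
      have ⟨B, hB⟩ := not_omegaHitting_no_continuous_selector_general hI hg
        fun A ↦ (hgA A).2.1.infinite_inter_suppB (hgA A).2.2
      hB (hgA B).1⟩
end

section
/- Let I be an ideal on ℕ and suppose there is a partition of ℕ into consecutive nonempty finite intervals {Iₙ : n ∈ ℕ} such that every set A ⊆ ℕ with |A ∩ Iₙ| ≤ 1 for all n belongs to I. Then the map g defined by g(A) = {min(A ∩ Iₙ) : n ∈ ℕ, A ∩ Iₙ ≠ ∅} is a continuous selector for I: g is continuous on [ℕ]^∞ (with the subspace topology of 2^ℕ) and for every infinite A ⊆ ℕ, g(A) is an infinite subset of A belonging to I. -/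
/-!
Whether `m` is selected from `A` depends only on the trace of `A` on the block containing `m`.
Since blocks are finite, each coordinate of the selector depends on finitely many coordinates of
`A`, which is continuity. If only finitely many points were selected, then `A` would be covered, up
to a finite set, by the finitely many finite blocks containing these points.
-/

section BlockMinima

open Set Function

variable {α ι : Type*} {s : ι → Set α} {A B : Set α} {m : α} {i : ι}

/-- The star of the point `m` in the family of blocks `s`: the union of the blocks containing `m`.
For a disjoint family this is the block of `m`, or `∅` if `m` lies in no block. -/
def blockStar (s : ι → Set α) (m : α) : Set α :=
  ⋃ i ∈ {i | m ∈ s i}, s i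

theorem subset_blockStar (hm : m ∈ s i) : s i ⊆ blockStar s m :=
  subset_biUnion_of_mem (u := s) hm

theorem eq_of_pairwise_disjoint_of_mem (hs : Pairwise (Disjoint on s)) {j : ι} (hi : m ∈ s i)
    (hj : m ∈ s j) : i = j :=
  hs.eq (not_disjoint_iff.2 ⟨m, hi, hj⟩)

theorem finite_blockStar (hs : Pairwise (Disjoint on s)) (hfin : ∀ i, (s i).Finite) (m : α) :
    (blockStar s m).Finite :=
  have hsub : {i | m ∈ s i}.Subsingleton := fun _ hi _ hj =>
    eq_of_pairwise_disjoint_of_mem hs hi hj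
  hsub.finite.biUnion fun i _ => hfin i

/-- The points of `A` that are least in the trace of `A` on some block of the family `s`. This is
the set `{min (A ∩ Iₙ) : A ∩ Iₙ ≠ ∅}` selected from `A`, with `s n = Iₙ`. -/
def blockMinima [Preorder α] (s : ι → Set α) (A : Set α) : Set α :=
  {m | ∃ i, IsLeast (A ∩ s i) m}

theorem blockMinima_subset [Preorder α] : blockMinima s A ⊆ A :=
  fun _ ⟨_, hm⟩ => hm.1.1

theorem mem_blockMinima_of_inter_blockStar_eq [Preorder α]
    (h : A ∩ blockStar s m = B ∩ blockStar s m) (hm : m ∈ blockMinima s A) :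
    m ∈ blockMinima s B := by
  obtain ⟨i, hi⟩ := hm
  have hAB : A ∩ s i = B ∩ s i := by
    rw [← inter_eq_right.2 (subset_blockStar hi.1.2), ← inter_assoc, h, inter_assoc]
  exact ⟨i, hAB ▸ hi⟩

theorem mem_blockMinima_congr [Preorder α] (h : A ∩ blockStar s m = B ∩ blockStar s m) :
    m ∈ blockMinima s A ↔ m ∈ blockMinima s B :=
  ⟨mem_blockMinima_of_inter_blockStar_eq h, mem_blockMinima_of_inter_blockStar_eq h.symm⟩

theorem subsingleton_blockMinima_inter [PartialOrder α] (hs : Pairwise (Disjoint on s)) (i : ι) :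
    (blockMinima s A ∩ s i).Subsingleton := by
  rintro a ⟨⟨p, ha⟩, hai⟩ b ⟨⟨q, hb⟩, hbi⟩
  obtain rfl := eq_of_pairwise_disjoint_of_mem hs hai ha.1.2
  obtain rfl := eq_of_pairwise_disjoint_of_mem hs hbi hb.1.2
  exact ha.unique hb

theorem exists_mem_blockMinima_of_mem [LinearOrder α] (hfin : (s i).Finite) {a : α} (haA : a ∈ A)
    (ha : a ∈ s i) : ∃ m ∈ blockMinima s A, m ∈ s i := by
  obtain ⟨m, hm, hmin⟩ := exists_min_image (A ∩ s i) id (hfin.inter_of_right A) ⟨a, haA, ha⟩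
  exact ⟨m, ⟨i, hm, hmin⟩, hm.2⟩

theorem infinite_blockMinima [LinearOrder α] (hstar : ∀ m, (blockStar s m).Finite)
    (hcover : (⋃ i, s i)ᶜ.Finite) (hA : A.Infinite) : (blockMinima s A).Infinite := by
  intro hmin
  refine hA (((hmin.biUnion fun m _ => hstar m).union hcover).subset fun a haA => ?_)
  by_cases ha : a ∈ ⋃ i, s i
  · obtain ⟨i, hi⟩ := mem_iUnion.1 ha
    obtain ⟨m, hm, hmi⟩ :=
      exists_mem_blockMinima_of_mem ((hstar a).subset (subset_blockStar hi)) haA hi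
    exact Or.inl (mem_biUnion hm (subset_blockStar hmi hi))
  · exact Or.inr ha

end BlockMinima

theorem continuous_of_dependsOn_finite {ι Y : Type*} {X : ι → Type*} [∀ i, TopologicalSpace (X i)]
    [∀ i, DiscreteTopology (X i)] [TopologicalSpace Y] {f : (∀ i, X i) → Y} {F : Set ι}
    (hF : F.Finite) (hf : DependsOn f F) : Continuous f := by
  refine continuous_iff_continuousAt.2 fun x => ?_
  have hagree : ∀ᶠ y in nhds x, ∀ i ∈ F, x i = y i :=
    (Filter.eventually_all_finite hF).2 fun i _ =>
      (continuous_apply i).continuousAt ((isOpen_discrete {b | x i = b}).mem_nhds rfl)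
  exact continuousAt_const.congr (hagree.mono fun y hy => hf hy)

theorem continuous_of_suppB_eq_blockMinima {α : Type} {ι : Type*} [Preorder α] {s : ι → Set α}
    (hstar : ∀ m, (blockStar s m).Finite) {g : (α → Bool) → (α → Bool)}
    (hg : ∀ x, suppB (g x) = blockMinima s (suppB x)) : Continuous g := by
  refine continuous_pi fun m => continuous_of_dependsOn_finite (hstar m) fun x y hxy => ?_
  have htrace : suppB x ∩ blockStar s m = suppB y ∩ blockStar s m := by
    ext a
    exact and_congr_left fun ha => Bool.eq_iff_iff.1 (hxy a ha)
  have hmem : m ∈ suppB (g x) ↔ m ∈ suppB (g y) := by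
    rw [hg, hg, mem_blockMinima_congr htrace]
  exact Bool.eq_iff_iff.2 hmem

theorem finite_compl_iUnion_Ico_succ {α : Type*} [LinearOrder α] [LocallyFiniteOrderBot α]
    {k : ℕ → α} (hk : ∀ n, k 0 ≤ k n) (hunbdd : ¬BddAbove (Set.range k)) :
    (⋃ n, Set.Ico (k n) (k (n + 1)))ᶜ.Finite := by
  have hcover : ⋃ n, Set.Ico (k n) (k (n + 1)) = Set.Ici (k 0) :=
    iUnion_Ico_map_succ_eq_Ici hk hunbdd
  rw [hcover, Set.compl_Ici]
  exact Set.finite_Iio (k 0)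

theorem interval_min_continuous_selector_general {α : Type} {ι : Type*} [LinearOrder α]
    (s : ι → Set α) (hs : Pairwise (Function.onFun Disjoint s)) (hfin : ∀ i, (s i).Finite)
    (hcover : (⋃ i, s i)ᶜ.Finite) (I : Set (α → Bool))
    (hsel : ∀ x : α → Bool, (∀ i, (suppB x ∩ s i).Subsingleton) → x ∈ I)
    (g : (α → Bool) → (α → Bool)) (hg : ∀ x, suppB (g x) = blockMinima s (suppB x)) :
    Continuous g ∧ ∀ x, InfiniteB x → g x ∈ I ∧ InfiniteB (g x) ∧ subB (g x) x := by
  have hstar := finite_blockStar hs hfin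
  refine ⟨continuous_of_suppB_eq_blockMinima hstar hg, fun x hx => ⟨hsel _ fun i => ?_, ?_, ?_⟩⟩
  · rw [hg]
    exact subsingleton_blockMinima_inter hs i
  · rw [InfiniteB, hg]
    exact infinite_blockMinima hstar hcover hx
  · exact (hg x).trans_subset blockMinima_subset

/-- If `ℕ` is partitioned into consecutive finite intervals `Iₙ = [k(n), k(n+1))` such that every
set meeting each interval in at most one point belongs to the ideal `I`, then the map
`g(A) = {min (A ∩ Iₙ) : A ∩ Iₙ ≠ ∅}` is a continuous selector for `I`. -/
theorem interval_min_continuous_selector (I : Set (ℕ → Bool)) (hI : IsIdealB I)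
    (k : ℕ → ℕ) (hk0 : k 0 = 0) (hkmono : StrictMono k)
    (hsel : ∀ x : ℕ → Bool,
      (∀ n, (suppB x ∩ Set.Ico (k n) (k (n + 1))).Subsingleton) → x ∈ I)
    (g : (ℕ → Bool) → (ℕ → Bool))
    (hg : ∀ x m, g x m = true ↔
      ∃ n, m ∈ suppB x ∩ Set.Ico (k n) (k (n + 1)) ∧
        ∀ j ∈ suppB x ∩ Set.Ico (k n) (k (n + 1)), m ≤ j) :
    Continuous (fun A : ↥InfiniteSets => g ↑A) ∧
    ∀ x : ℕ → Bool, InfiniteB x → g x ∈ I ∧ InfiniteB (g x) ∧ subB (g x) x := by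
  have hcover := finite_compl_iUnion_Ico_succ (fun n => hkmono.monotone n.zero_le)
    hkmono.not_bddAbove_range_of_wellFoundedLT
  have hselector := interval_min_continuous_selector_general
    (fun n => Set.Ico (k n) (k (n + 1))) hkmono.monotone.pairwise_disjoint_on_Ico_succ
    (fun _ => Set.finite_Ico _ _) hcover I hsel g fun x => Set.ext (hg x)
  exact hselector.imp_left fun hcont => hcont.comp continuous_subtype_val
end
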